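/- Let m_0 ∈ (0,1/2) be a point at which f_0 attains its minimum over (0,1/2). Suppose t ∈ (0,m_0) and β = f_0(t). Then 1/(βt) > 3/2 and 1/(βt) + 2/(β(1−2t)) > 9/2; consequently the Hessian of F_β is positive definite at each of the three points (t,t), (1−2t,t), (t,1−2t), so each of these points is a local minimum of F_β. -/

import Mathlib

/-!
With `x₀ = 1 - x₁ - x₂` one has `|ψ(x)|² = (3/2) Σ xᵢ² - 1/2`, so `F_β` is symmetric in the three
coordinates and its Hessian is the quadratic form `(1/β) Σ dᵢ²/xᵢ - (3/2) Σ dᵢ²` on increments with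
`Σ dᵢ = 0`. At a point with coordinates `t, t, 1-2t` (in any order) it is diagonalised by `a - b`
and `a + b`, where `a, b` are the increments of the two equal coordinates; positivity in these two
directions is `1/(βt) > 3/2` and `1/(βt) + 2/(β(1-2t)) > 9/2`.

To get the two inequalities, put `u = (1-2t)/t`. Then `f₀ = (2/3) (u+2)/(u-1) log u`, the first
inequality becomes `log u < u - 1`, true for `u > 1`, and the second becomes `G(u) > 0` with
`G(u) = (u + 1 - 2/u)/3 - log u`. Moreover `df₀/du = 2 G(u)/(u-1)²`, so `G` vanishes at the
minimizer. Since `G' = (u-1)(u-2)/(3u²)` and `G(1) = 0`, `G < 0` on `(0,2] \ {1}` and `G` increases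
on `[2,∞)`; hence the minimizer has `u₀ > 2`, and `t < m₀`, i.e. `u > u₀`, gives `G(u) > 0`
(`minimizer_auxG`, `weights`).

For the local minimum, `β = f₀(t)` is the critical-point equation, so `F_β(x) - F_β(p)` equals
`(1/β) Σ (xᵢ log (xᵢ/pᵢ) - xᵢ + pᵢ) - (3/4) Σ (xᵢ-pᵢ)²`. Each relative-entropy term is at least
`(xᵢ-pᵢ)²/(2κpᵢ)` when `xᵢ ≤ κpᵢ` (`entropy_lower`), and for some `κ > 1` the Hessian form stays
nonnegative after division of its entropy part by `κ` (`potF_criterion`).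
-/

/-- The spin value `v_k = (cos(2πk/3), sin(2πk/3))`. -/
noncomputable def potV (k : ℕ) : ℝ × ℝ :=
  (Real.cos (2 * Real.pi * k / 3), Real.sin (2 * Real.pi * k / 3))

/-- `ψ(x) = (2x₁+x₂−1)v₁ + (x₁+2x₂−1)v₂`. -/
noncomputable def potPsi (x : ℝ × ℝ) : ℝ × ℝ :=
  ((2 * x.1 + x.2 - 1) * (potV 1).1 + (x.1 + 2 * x.2 - 1) * (potV 2).1,
   (2 * x.1 + x.2 - 1) * (potV 1).2 + (x.1 + 2 * x.2 - 1) * (potV 2).2)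

/-- The entropy `S(x) = Σᵢ xᵢ log(3xᵢ)` with `x₀ = 1 − x₁ − x₂`
(the convention `t log t = 0` at `t = 0` holds since `Real.log 0 = 0`). -/
noncomputable def potS (x : ℝ × ℝ) : ℝ :=
  (1 - x.1 - x.2) * Real.log (3 * (1 - x.1 - x.2))
    + x.1 * Real.log (3 * x.1) + x.2 * Real.log (3 * x.2)

/-- The mean-field Potts potential `F_β(x) = −(1/2)|ψ(x)|² + (1/β)S(x)`. -/
noncomputable def potF (β : ℝ) (x : ℝ × ℝ) : ℝ :=
  - (1 / 2) * ((potPsi x).1 ^ 2 + (potPsi x).2 ^ 2) + (1 / β) * potS x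

/-- The open two-dimensional simplex `Ξ°`. -/
def simplexInt : Set (ℝ × ℝ) := {x | 0 < x.1 ∧ 0 < x.2 ∧ x.1 + x.2 < 1}

/-- The canonical basis of `ℝ × ℝ`. -/
noncomputable def eBasis : Fin 2 → ℝ × ℝ := ![(1, 0), (0, 1)]

/-- The Hessian matrix of a function `f : ℝ × ℝ → ℝ` at a point `x`. -/
noncomputable def hessian (f : ℝ × ℝ → ℝ) (x : ℝ × ℝ) : Matrix (Fin 2) (Fin 2) ℝ :=
  Matrix.of fun i j => fderiv ℝ (fun y => fderiv ℝ f y (eBasis j)) x (eBasis i)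

/-- `f₀(t) = (2/(3(1−3t))) log((1−2t)/t)` for `t ≠ 1/3`, with `f₀(1/3) = 2`. -/
noncomputable def f0 (t : ℝ) : ℝ :=
  if t = 1 / 3 then 2 else 2 / (3 * (1 - 3 * t)) * Real.log ((1 - 2 * t) / t)

/-! ### The potential, its differential and its Hessian -/

lemma potV_one : potV 1 = (-(1 / 2), √3 / 2) := by
  have h : 2 * Real.pi * ((1 : ℕ) : ℝ) / 3 = Real.pi - Real.pi / 3 := by push_cast; ring
  rw [potV, h, Real.cos_pi_sub, Real.sin_pi_sub, Real.cos_pi_div_three, Real.sin_pi_div_three]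

lemma potV_two : potV 2 = (-(1 / 2), -(√3 / 2)) := by
  have h : 2 * Real.pi * ((2 : ℕ) : ℝ) / 3 = Real.pi / 3 + Real.pi := by push_cast; ring
  rw [potV, h, Real.cos_add_pi, Real.sin_add_pi, Real.cos_pi_div_three, Real.sin_pi_div_three]

lemma potPsi_sq (x : ℝ × ℝ) : (potPsi x).1 ^ 2 + (potPsi x).2 ^ 2 =
    3 / 2 * ((1 - x.1 - x.2) ^ 2 + x.1 ^ 2 + x.2 ^ 2) - 1 / 2 := by
  have h3 : √3 ^ 2 = (3 : ℝ) := Real.sq_sqrt (by norm_num)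
  simp only [potPsi, potV_one, potV_two]
  linear_combination (1 / 4 * (x.1 - x.2) ^ 2) * h3

/-- `F_β` written symmetrically in `x₀, x₁, x₂`. -/
lemma potF_eq (β : ℝ) : potF β = fun x : ℝ × ℝ =>
    -(3 / 4) * ((1 - x.1 - x.2) ^ 2 + x.1 ^ 2 + x.2 ^ 2) + 1 / 4 + 1 / β *
      ((1 - x.1 - x.2) * Real.log (3 * (1 - x.1 - x.2))
        + x.1 * Real.log (3 * x.1) + x.2 * Real.log (3 * x.2)) := by
  funext x
  rw [potF, potPsi_sq, potS]
  ring

lemma hasDerivAt_mul_log_three {s : ℝ} (hs : s ≠ 0) :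
    HasDerivAt (fun s : ℝ => s * Real.log (3 * s)) (Real.log (3 * s) + 1) s := by
  have h := (hasDerivAt_id s).mul (((hasDerivAt_id s).const_mul 3).log (by simpa using hs))
  refine h.congr_deriv ?_
  simp
  field_simp

/-- The differential of `F_β`; its two coefficients are the partial derivatives
`-(3/2)(xᵢ - x₀) + (1/β) log (xᵢ / x₀)`. -/
lemma potF_hasFDerivAt (β : ℝ) {x : ℝ × ℝ} (hx : x ∈ simplexInt) :
    HasFDerivAt (potF β)
      ((-(3 / 2) * (x.1 - (1 - x.1 - x.2))
          + 1 / β * (Real.log (3 * x.1) - Real.log (3 * (1 - x.1 - x.2)))) •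
          ContinuousLinearMap.fst ℝ ℝ ℝ +
        (-(3 / 2) * (x.2 - (1 - x.1 - x.2))
          + 1 / β * (Real.log (3 * x.2) - Real.log (3 * (1 - x.1 - x.2)))) •
          ContinuousLinearMap.snd ℝ ℝ ℝ) x := by
  obtain ⟨h1, h2, h3⟩ := hx
  rw [potF_eq]
  have d1 : HasFDerivAt (fun y : ℝ × ℝ => y.1) (ContinuousLinearMap.fst ℝ ℝ ℝ) x := hasFDerivAt_fst
  have d2 : HasFDerivAt (fun y : ℝ × ℝ => y.2) (ContinuousLinearMap.snd ℝ ℝ ℝ) x := hasFDerivAt_snd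
  have d0 := (d1.const_sub 1).sub d2
  have e0 := (hasDerivAt_mul_log_three (s := 1 - x.1 - x.2) (by linarith)).comp_hasFDerivAt x d0
  have e1 := (hasDerivAt_mul_log_three h1.ne').comp_hasFDerivAt x d1
  have e2 := (hasDerivAt_mul_log_three h2.ne').comp_hasFDerivAt x d2
  have q := ((((d0.pow 2).add (d1.pow 2)).add (d2.pow 2)).const_mul (-(3 / 4))).add_const (1 / 4)
  have h := q.add (((e0.add e1).add e2).const_mul (1 / β))
  refine h.congr_fderiv ?_
  ext <;> simp <;> ring

lemma isOpen_simplexInt : IsOpen simplexInt :=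
  (isOpen_lt continuous_const continuous_fst).inter
    ((isOpen_lt continuous_const continuous_snd).inter
      (isOpen_lt (continuous_fst.add continuous_snd) continuous_const))

lemma hessian_potF (β : ℝ) {x : ℝ × ℝ} (hx : x ∈ simplexInt) :
    hessian (potF β) x =
      !![-3 + 1 / β * (1 / x.1 + 1 / (1 - x.1 - x.2)), -(3 / 2) + 1 / β * (1 / (1 - x.1 - x.2));
        -(3 / 2) + 1 / β * (1 / (1 - x.1 - x.2)),
        -3 + 1 / β * (1 / x.2 + 1 / (1 - x.1 - x.2))] := by
  have hev : ∀ᶠ y in nhds x, y ∈ simplexInt := isOpen_simplexInt.mem_nhds hx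
  obtain ⟨h1, h2, h3⟩ := hx
  have d1 : HasFDerivAt (fun y : ℝ × ℝ => y.1) (ContinuousLinearMap.fst ℝ ℝ ℝ) x := hasFDerivAt_fst
  have d2 : HasFDerivAt (fun y : ℝ × ℝ => y.2) (ContinuousLinearMap.snd ℝ ℝ ℝ) x := hasFDerivAt_snd
  have d0 := (d1.const_sub 1).sub d2
  have h0 : 1 - x.1 - x.2 ≠ 0 := by linarith
  have l0 := (d0.const_mul 3).log (by simpa using h0)
  have l1 := (d1.const_mul 3).log (by simpa using h1.ne')
  have l2 := (d2.const_mul 3).log (by simpa using h2.ne')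
  have k1 := ((d1.sub d0).const_mul (-(3 / 2))).add ((l1.sub l0).const_mul (1 / β))
  have k2 := ((d2.sub d0).const_mul (-(3 / 2))).add ((l2.sub l0).const_mul (1 / β))
  have f1 := (k1.congr_of_eventuallyEq (f₁ := fun y => fderiv ℝ (potF β) y (1, 0)) (by
    filter_upwards [hev] with y hy
    rw [(potF_hasFDerivAt β hy).fderiv]
    simp)).fderiv
  have f2 := (k2.congr_of_eventuallyEq (f₁ := fun y => fderiv ℝ (potF β) y (0, 1)) (by
    filter_upwards [hev] with y hy
    rw [(potF_hasFDerivAt β hy).fderiv]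
    simp)).fderiv
  ext i j
  fin_cases i <;> fin_cases j <;>
    simp [hessian, eBasis, f1, f2] <;> field_simp <;> ring

/-! ### Second-order criterion for a local minimum -/

/-- The relative entropy `y log (y/p) - y + p` dominates `(y-p)²/(2M)` as long as `y, p ≤ M`:
as functions of `y`, their difference is convex on `(0, M]` and critical at `y = p`. -/
lemma entropy_lower {p M y : ℝ} (hp : 0 < p) (hpM : p ≤ M) (hy : 0 < y) (hyM : y ≤ M) :
    (y - p) ^ 2 / (2 * M) ≤ y * Real.log y - y * Real.log p - (y - p) := by
  have hM : 0 < M := hp.trans_le hpM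
  set g : ℝ → ℝ := fun s =>
    s * Real.log s - s * Real.log p - (s - p) - (s - p) ^ 2 / (2 * M) with hg
  set g' : ℝ → ℝ := fun s => Real.log s - Real.log p - (s - p) / M with hg'
  have hd : ∀ s, 0 < s → HasDerivAt g (g' s) s := by
    intro s hs
    have hid := hasDerivAt_id s
    have h := (((hid.mul (Real.hasDerivAt_log hs.ne')).sub (hid.mul_const (Real.log p))).sub
      (hid.sub_const p)).sub (((hid.sub_const p).pow 2).div_const (2 * M))
    refine h.congr_deriv ?_
    simp [hg']
    field_simp
    ring
  have hd' : ∀ s, 0 < s → HasDerivAt g' (1 / s - 1 / M) s := by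
    intro s hs
    have hid := hasDerivAt_id s
    have h := ((Real.hasDerivAt_log hs.ne').sub_const (Real.log p)).sub
      ((hid.sub_const p).div_const M)
    refine h.congr_deriv ?_
    simp
  have hmono : MonotoneOn g' (Set.Ioc 0 M) := by
    refine monotoneOn_of_deriv_nonneg (convex_Ioc 0 M)
      (fun s hs => (hd' s hs.1).continuousAt.continuousWithinAt)
      (fun s hs => ((hd' s (interior_subset hs).1).differentiableAt).differentiableWithinAt) ?_
    intro s hs
    obtain ⟨hs0, hsM⟩ := interior_subset hs
    rw [(hd' s hs0).deriv, sub_nonneg]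
    exact one_div_le_one_div_of_le hs0 hsM
  have hconv : ConvexOn ℝ (Set.Ioc 0 M) g := by
    refine MonotoneOn.convexOn_of_deriv (convex_Ioc 0 M)
      (fun s hs => (hd s hs.1).continuousAt.continuousWithinAt)
      (fun s hs => ((hd s (interior_subset hs).1).differentiableAt).differentiableWithinAt) ?_
    intro a ha b hb hab
    rw [(hd a (interior_subset ha).1).deriv, (hd b (interior_subset hb).1).deriv]
    exact hmono (interior_subset ha) (interior_subset hb) hab
  have hgp : HasDerivAt g 0 p := by simpa [hg'] using hd p hp
  have key : g p ≤ g y := by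
    rcases lt_trichotomy p y with h | rfl | h
    · have := hconv.le_slope_of_hasDerivAt ⟨hp, hpM⟩ ⟨hy, hyM⟩ h hgp
      rw [slope_def_field, le_div_iff₀ (by linarith)] at this
      linarith
    · exact le_rfl
    · have := hconv.slope_le_of_hasDerivAt ⟨hy, hyM⟩ ⟨hp, hpM⟩ h hgp
      rw [slope_def_field, div_le_iff₀ (by linarith)] at this
      linarith
  simp [hg] at key
  linarith

/-- Second-order criterion. The critical-point equation and the quadratic inequality are tested
on increments `(-(a+b), a, b)` of `(x₀, x₁, x₂)`. The factor `κ > 1` quantifies positive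
definiteness: it bounds how far the coordinates may move (up to `xᵢ ≤ κ pᵢ`) while the entropy
still beats the interaction term. -/
lemma potF_criterion {β κ : ℝ} (hβ : 0 < β) (hκ : 1 < κ) {p : ℝ × ℝ} (hp : p ∈ simplexInt)
    (hcrit : ∀ a b : ℝ, (-(a + b)) * (Real.log (1 - p.1 - p.2) / β - 3 / 2 * (1 - p.1 - p.2))
      + a * (Real.log p.1 / β - 3 / 2 * p.1) + b * (Real.log p.2 / β - 3 / 2 * p.2) = 0)
    (hquad : ∀ a b : ℝ, κ * (3 / 2 * ((a + b) ^ 2 + a ^ 2 + b ^ 2)) ≤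
      1 / β * ((a + b) ^ 2 / (1 - p.1 - p.2) + a ^ 2 / p.1 + b ^ 2 / p.2)) :
    (hessian (potF β) p).PosDef ∧ IsLocalMin (potF β) p := by
  have hp' := hp
  obtain ⟨h1, h2, h3⟩ := hp'
  have h0 : 0 < 1 - p.1 - p.2 := by linarith
  constructor
  · rw [hessian_potF β hp]
    refine Matrix.PosDef.of_dotProduct_mulVec_pos ?_ ?_
    · ext i j
      fin_cases i <;> fin_cases j <;> simp
    · intro v hv
      have hne : 0 < (v 0 + v 1) ^ 2 + v 0 ^ 2 + v 1 ^ 2 := by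
        have : v 0 ≠ 0 ∨ v 1 ≠ 0 := by
          by_contra! h
          exact hv (by ext i; fin_cases i <;> simp [h])
        rcases this with h | h <;> positivity
      have hq := hquad (v 0) (v 1)
      have := mul_lt_mul_of_pos_right hκ
        (show 0 < 3 / 2 * ((v 0 + v 1) ^ 2 + v 0 ^ 2 + v 1 ^ 2) by positivity)
      have key : 0 < 1 / β * ((v 0 + v 1) ^ 2 / (1 - p.1 - p.2) + v 0 ^ 2 / p.1 + v 1 ^ 2 / p.2)
        - 3 / 2 * ((v 0 + v 1) ^ 2 + v 0 ^ 2 + v 1 ^ 2) := by linarith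
      refine key.trans_eq ?_
      simp [Matrix.mulVec, dotProduct, Fin.sum_univ_two]
      ring
  · have ev : ∀ᶠ y : ℝ × ℝ in nhds p, y ∈ simplexInt ∧ y.1 < κ * p.1 ∧ y.2 < κ * p.2 ∧
        1 - y.1 - y.2 < κ * (1 - p.1 - p.2) := by
      refine Filter.Eventually.and (isOpen_simplexInt.mem_nhds hp)
        (Filter.Eventually.and ?_ (Filter.Eventually.and ?_ ?_))
      · exact continuous_fst.continuousAt.eventually_lt continuousAt_const (by nlinarith)
      · exact continuous_snd.continuousAt.eventually_lt continuousAt_const (by nlinarith)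
      · exact ContinuousAt.eventually_lt (by fun_prop) continuousAt_const (by nlinarith)
    filter_upwards [ev] with y ⟨⟨y1, y2, y3⟩, k1, k2, k0⟩
    have y0 : 0 < 1 - y.1 - y.2 := by linarith
    have e0 := entropy_lower h0 (by nlinarith) y0 k0.le
    have e1 := entropy_lower h1 (by nlinarith) y1 k1.le
    have e2 := entropy_lower h2 (by nlinarith) y2 k2.le
    have hs := mul_le_mul_of_nonneg_left (add_le_add (add_le_add e0 e1) e2) (one_div_pos.2 hβ).le
    have hc := hcrit (y.1 - p.1) (y.2 - p.2)
    have hq := mul_le_mul_of_nonneg_left (hquad (y.1 - p.1) (y.2 - p.2))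
      (show 0 ≤ 1 / (2 * κ) by positivity)
    have l : ∀ {s : ℝ}, 0 < s → Real.log (3 * s) = Real.log 3 + Real.log s := fun hs =>
      Real.log_mul (by norm_num) hs.ne'
    have r1 : 1 / (2 * κ) * (1 / β * ((y.1 - p.1 + (y.2 - p.2)) ^ 2 / (1 - p.1 - p.2) +
        (y.1 - p.1) ^ 2 / p.1 + (y.2 - p.2) ^ 2 / p.2)) =
      1 / β * ((1 - y.1 - y.2 - (1 - p.1 - p.2)) ^ 2 / (2 * (κ * (1 - p.1 - p.2))) +
        (y.1 - p.1) ^ 2 / (2 * (κ * p.1)) + (y.2 - p.2) ^ 2 / (2 * (κ * p.2))) := by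
      field_simp
      ring
    have r2 : 1 / (2 * κ) * (κ * (3 / 2 * ((y.1 - p.1 + (y.2 - p.2)) ^ 2 + (y.1 - p.1) ^ 2 +
        (y.2 - p.2) ^ 2))) = 3 / 4 * ((y.1 - p.1 + (y.2 - p.2)) ^ 2 + (y.1 - p.1) ^ 2 +
        (y.2 - p.2) ^ 2) := by
      field_simp
      ring
    rw [r1, r2] at hq
    have hfin := hq.trans hs
    rw [potF_eq]
    simp only [l y0, l y1, l y2, l h0, l h1, l h2]
    rw [← sub_nonneg] at hfin ⊢
    refine hfin.trans_eq ?_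
    -- The terms of the entropy linear in the increment cancel by the critical-point equation.
    linear_combination (-1) * hc

/-! ### The minimizer of `f₀` -/

/-- `G(u) = (u + 1 - 2/u)/3 - log u`. Under `t = 1/(u+2)`, its sign is that of `df₀/du`, and
`G(u) > 0` with `u > 1` is equivalent to `1/(βt) + 2/(β(1-2t)) > 9/2` for `β = f₀(t)`. -/
noncomputable def auxG (u : ℝ) : ℝ := (u + 1 - 2 / u) / 3 - Real.log u

lemma auxG_hasDerivAt {u : ℝ} (hu : 0 < u) :
    HasDerivAt auxG ((u - 1) * (u - 2) / (3 * u ^ 2)) u := by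
  have h := ((((hasDerivAt_id u).add_const 1).sub
    ((hasDerivAt_const u (2 : ℝ)).div (hasDerivAt_id u) hu.ne')).div_const 3).sub
      (Real.hasDerivAt_log hu.ne')
  refine h.congr_deriv ?_
  simp
  field_simp
  ring

lemma auxG_continuousOn {s : Set ℝ} (hs : ∀ u ∈ s, 0 < u) : ContinuousOn auxG s :=
  fun u hu => (auxG_hasDerivAt (hs u hu)).continuousAt.continuousWithinAt

lemma auxG_one : auxG 1 = 0 := by norm_num [auxG]

lemma auxG_neg {u : ℝ} (hu : 0 < u) (h1 : u ≠ 1) (h2 : u ≤ 2) : auxG u < 0 := by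
  rw [← auxG_one]
  rcases lt_or_gt_of_ne h1 with h | h
  · refine strictMonoOn_of_deriv_pos (convex_Icc u 1)
      (auxG_continuousOn fun x hx => hu.trans_le hx.1) ?_ ⟨le_rfl, h.le⟩ ⟨h.le, le_rfl⟩ h
    rw [interior_Icc]
    rintro x ⟨hx, hx'⟩
    have hx0 : 0 < x := hu.trans hx
    rw [(auxG_hasDerivAt hx0).deriv]
    exact div_pos (by nlinarith) (by positivity)
  · refine strictAntiOn_of_deriv_neg (convex_Icc 1 2)
      (auxG_continuousOn fun x hx => one_pos.trans_le hx.1) ?_ ⟨le_rfl, by norm_num⟩ ⟨h.le, h2⟩ h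
    rw [interior_Icc]
    rintro x ⟨hx, hx'⟩
    have hx0 : 0 < x := by linarith
    rw [(auxG_hasDerivAt hx0).deriv]
    exact div_neg_of_neg_of_pos (by nlinarith) (by positivity)

lemma auxG_strictMonoOn : StrictMonoOn auxG (Set.Ici 2) := by
  refine strictMonoOn_of_deriv_pos (convex_Ici 2)
    (auxG_continuousOn fun x hx => two_pos.trans_le hx) ?_
  rw [interior_Ici]
  intro x hx
  have hx2 : 2 < x := hx
  rw [(auxG_hasDerivAt (by linarith)).deriv]
  exact div_pos (by nlinarith) (by positivity)

/-- `f₀` in the coordinate `u = (1-2t)/t`, that is `t = 1/(u+2)`. -/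
lemma f0_eq {u : ℝ} (hu : 0 < u) (h1 : u ≠ 1) :
    f0 (1 / (u + 2)) = 2 / 3 * ((u + 2) / (u - 1) * Real.log u) := by
  have h : 1 / (u + 2) ≠ 1 / 3 := by
    intro h
    rw [div_eq_div_iff (by positivity) (by norm_num)] at h
    exact h1 (by linarith)
  have h1' : u - 1 ≠ 0 := sub_ne_zero.2 h1
  have e : (1 - 2 * (1 / (u + 2))) / (1 / (u + 2)) = u := by field_simp; ring
  have e2 : 1 - 3 * (1 / (u + 2)) = (u - 1) / (u + 2) := by field_simp; ring
  rw [f0, if_neg h, e, e2]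
  field_simp

lemma one_div_add_two_mem {u : ℝ} (hu : 0 < u) : 1 / (u + 2) ∈ Set.Ioo (0 : ℝ) (1 / 2) :=
  ⟨by positivity, by gcongr; linarith⟩

/-- A minimizer of `f₀` lies in the region `u > 2` and is a zero of `G`. -/
lemma minimizer_auxG {u : ℝ} (hu : 0 < u)
    (hmin : ∀ s ∈ Set.Ioo (0 : ℝ) (1 / 2), f0 (1 / (u + 2)) ≤ f0 s) :
    2 < u ∧ auxG u = 0 := by
  have h1 : u ≠ 1 := by
    rintro rfl
    -- `u = 1` is `t = 1/3`, where `f₀ = 2`; but at `u = 4` one has `f₀ = (8/3) log 2 < 2`.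
    have h := hmin _ (one_div_add_two_mem (u := 4) (by norm_num))
    have h3 : f0 (1 / (1 + 2)) = 2 := if_pos (by norm_num)
    have h4 : Real.log 4 = 2 * Real.log 2 := by
      rw [show (4 : ℝ) = 2 ^ 2 by norm_num, Real.log_pow]; norm_num
    rw [f0_eq (u := 4) (by norm_num) (by norm_num), h3, h4] at h
    have := Real.log_two_lt_d9
    norm_num at h
    linarith
  have h1' : u - 1 ≠ 0 := sub_ne_zero.2 h1
  have hd : HasDerivAt (fun v : ℝ => 2 / 3 * ((v + 2) / (v - 1) * Real.log v))
      (2 / (u - 1) ^ 2 * auxG u) u := by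
    have h := (((((hasDerivAt_id u).add_const 2).div ((hasDerivAt_id u).sub_const 1) h1').mul
      (Real.hasDerivAt_log hu.ne')).const_mul (2 / 3))
    refine h.congr_deriv ?_
    simp [auxG]
    field_simp
    ring
  have hloc : IsLocalMin (fun v : ℝ => 2 / 3 * ((v + 2) / (v - 1) * Real.log v)) u := by
    filter_upwards [lt_mem_nhds hu, isOpen_ne.mem_nhds h1] with v hv hv1
    rw [← f0_eq hu h1, ← f0_eq hv hv1]
    exact hmin _ (one_div_add_two_mem hv)
  have hG : auxG u = 0 := by
    have := hloc.hasDerivAt_eq_zero hd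
    simpa [h1'] using this
  refine ⟨?_, hG⟩
  by_contra! h
  exact (auxG_neg hu h1 h).ne hG

/-- Positivity of `β`, the two eigenvalue inequalities, and the critical-point equation. -/
lemma weights {m0 t β : ℝ}
    (hm : m0 ∈ Set.Ioo (0 : ℝ) (1 / 2))
    (hmin : ∀ s ∈ Set.Ioo (0 : ℝ) (1 / 2), f0 m0 ≤ f0 s)
    (ht : t ∈ Set.Ioo (0 : ℝ) m0) (hβ : β = f0 t) :
    0 < β ∧ 3 / 2 < 1 / (β * t) ∧ 9 / 2 < 1 / (β * t) + 2 / (β * (1 - 2 * t)) ∧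
      3 / 2 * β * (1 - 3 * t) = Real.log (1 - 2 * t) - Real.log t := by
  obtain ⟨hm0, hm2⟩ := hm
  obtain ⟨ht0, htm⟩ := ht
  have inv : ∀ s : ℝ, 0 < s → s = 1 / ((1 - 2 * s) / s + 2) := fun s hs => by
    field_simp; ring
  have hum : 0 < (1 - 2 * m0) / m0 := div_pos (by linarith) hm0
  rw [inv m0 hm0] at hmin
  obtain ⟨h2, hG⟩ := minimizer_auxG hum hmin
  have hlt : (1 - 2 * m0) / m0 < (1 - 2 * t) / t := by
    rw [div_lt_div_iff₀ hm0 ht0]; nlinarith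
  have hGt : 0 < auxG ((1 - 2 * t) / t) := by
    rw [← hG]; exact auxG_strictMonoOn h2.le (h2.trans hlt).le hlt
  have hlog : Real.log ((1 - 2 * t) / t) = Real.log (1 - 2 * t) - Real.log t :=
    Real.log_div (by linarith) ht0.ne'
  rw [← hlog]
  set u := (1 - 2 * t) / t with hu
  have hu2 : 2 < u := h2.trans hlt
  have htu : t = 1 / (u + 2) := inv t ht0
  have hL : 0 < Real.log u := Real.log_pos (by linarith)
  have hL1 : Real.log u < u - 1 := Real.log_lt_sub_one_of_pos (by linarith) (by linarith)
  have hu1 : 0 < u - 1 := by linarith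
  have hb : β = 2 / 3 * ((u + 2) / (u - 1) * Real.log u) := by
    rw [hβ]; conv_lhs => rw [htu]
    exact f0_eq (by linarith) (by linarith)
  clear_value u
  have hβ0 : 0 < β := by rw [hb]; positivity
  have hG3 : 3 * u * Real.log u < (u + 2) * (u - 1) := by
    have : auxG u = ((u + 2) * (u - 1) - 3 * u * Real.log u) / (3 * u) := by
      rw [auxG]; field_simp; ring
    rw [this] at hGt
    have := (div_pos_iff_of_pos_right (by positivity)).1 hGt
    linarith
  have eA : 1 / (β * t) = 3 / 2 * ((u - 1) / Real.log u) := by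
    rw [hb, htu]; field_simp
  have e12 : 1 - 2 * t = u / (u + 2) := by rw [htu]; field_simp; ring
  have eB : 1 / (β * t) + 2 / (β * (1 - 2 * t)) =
      9 / 2 * ((u + 2) * (u - 1) / (3 * u * Real.log u)) := by
    rw [eA, e12, hb]; field_simp; ring
  refine ⟨hβ0, ?_, ?_, ?_⟩
  · rw [eA]
    have := (one_lt_div hL).2 hL1
    linarith
  · rw [eB]
    have := (one_lt_div (show 0 < 3 * u * Real.log u by positivity)).2 hG3
    linarith
  · rw [hb, htu]; field_simp; ring

/-! ### The three energetic points -/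

/-- if `m₀` minimizes `f₀` on `(0,1/2)`, `t ∈ (0,m₀)` and `β = f₀(t)`, then
`1/(βt) > 3/2`, `1/(βt) + 2/(β(1−2t)) > 9/2`, and the Hessian of `F_β` is positive
definite at `(t,t)`, `(1−2t,t)`, `(t,1−2t)`, so each of these points is a local minimum. -/
theorem potts_energetic_points_local_minima (m0 t β : ℝ)
    (hm : m0 ∈ Set.Ioo (0 : ℝ) (1 / 2))
    (hmin : ∀ s ∈ Set.Ioo (0 : ℝ) (1 / 2), f0 m0 ≤ f0 s)
    (ht : t ∈ Set.Ioo (0 : ℝ) m0) (hβ : β = f0 t) :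
    3 / 2 < 1 / (β * t) ∧ 9 / 2 < 1 / (β * t) + 2 / (β * (1 - 2 * t)) ∧
    ∀ p ∈ ({(t, t), (1 - 2 * t, t), (t, 1 - 2 * t)} : Set (ℝ × ℝ)),
      (hessian (potF β) p).PosDef ∧ IsLocalMin (potF β) p := by
  obtain ⟨hβ0, hA, hB, hcrit⟩ := weights hm hmin ht hβ
  refine ⟨hA, hB, ?_⟩
  have ht0 : 0 < t := ht.1
  have hr : 0 < 1 - 2 * t := by linarith [hm.2, ht.2]
  obtain ⟨κ, hκ, hκA, hκB⟩ : ∃ κ : ℝ, 1 < κ ∧ κ * (3 / 2) ≤ 1 / (β * t) ∧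
      κ * (9 / 2) ≤ 1 / (β * t) + 2 / (β * (1 - 2 * t)) := by
    refine ⟨min (1 / (β * t) / (3 / 2)) ((1 / (β * t) + 2 / (β * (1 - 2 * t))) / (9 / 2)),
      lt_min ((one_lt_div (by norm_num)).2 hA) ((one_lt_div (by norm_num)).2 hB), ?_, ?_⟩
    · rw [← le_div_iff₀ (by norm_num)]; exact min_le_left _ _
    · rw [← le_div_iff₀ (by norm_num)]; exact min_le_right _ _
  -- `(a - b)` and `(a + b)` are the eigendirections of the Hessian at `(t, t)`.
  have hq : ∀ a b : ℝ, κ * (3 / 2 * ((a + b) ^ 2 + a ^ 2 + b ^ 2)) ≤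
      1 / β * ((a + b) ^ 2 / (1 - 2 * t) + a ^ 2 / t + b ^ 2 / t) := by
    intro a b
    have i1 := mul_le_mul_of_nonneg_right hκA (sq_nonneg (a - b))
    have i2 := mul_le_mul_of_nonneg_right hκB (sq_nonneg (a + b))
    have e : 1 / β * ((a + b) ^ 2 / (1 - 2 * t) + a ^ 2 / t + b ^ 2 / t) =
        1 / 2 * (1 / (β * t) * (a - b) ^ 2) +
        1 / 2 * ((1 / (β * t) + 2 / (β * (1 - 2 * t))) * (a + b) ^ 2) := by
      field_simp; ring
    rw [e]
    linarith
  have hc : Real.log (1 - 2 * t) / β - 3 / 2 * (1 - 2 * t) = Real.log t / β - 3 / 2 * t := by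
    field_simp
    linarith
  have e1 : 1 - t - t = 1 - 2 * t := by ring
  have e2 : 1 - (1 - 2 * t) - t = t := by ring
  have e3 : 1 - t - (1 - 2 * t) = t := by ring
  rintro p (rfl | rfl | rfl)
  · refine potF_criterion hβ0 hκ ⟨ht0, ht0, by linarith⟩ (fun a b => ?_) (fun a b => ?_)
    · simp only [e1, hc]; ring
    · simpa only [e1] using hq a b
  · refine potF_criterion hβ0 hκ ⟨hr, ht0, by linarith⟩ (fun a b => ?_) (fun a b => ?_)
    · simp only [e2, hc]; ring
    · simp only [e2]
      convert hq (-(a + b)) b using 1 <;> ring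
  · refine potF_criterion hβ0 hκ ⟨ht0, hr, by linarith⟩ (fun a b => ?_) (fun a b => ?_)
    · simp only [e3, hc]; ring
    · simp only [e3]
      convert hq a (-(a + b)) using 1 <;> ring
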